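/- A continuous surjection f : X → Y of compact Hausdorff spaces is fully closed if and only if for every continuous map g : X → K into a compact metric space K and every ε > 0 the set H_{g,ε} = {y ∈ Y : diam(g(f⁻¹(y))) ≥ ε} is finite. -/

import Mathlib

open Set Metric Topology Filter

/-- A continuous map of compacts is fully closed if images of disjoint closed sets
have finite intersection. -/
def FullyClosed {X Y : Type*} [TopologicalSpace X] [TopologicalSpace Y] (f : X → Y) : Prop :=
  ∀ A B : Set X, IsClosed A → IsClosed B → Disjoint A B → (f '' A ∩ f '' B).Finite

/-- Proposition 3.1: `f` is fully closed iff for every continuous map `g`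
into a compact metric space and every `ε > 0` the set of points whose fiber has
`g`-image of diameter at least `ε` is finite. -/
theorem fullyClosed_iff_finite_large_oscillation.{u}
    {X Y : Type*} [TopologicalSpace X] [CompactSpace X] [T2Space X]
    [TopologicalSpace Y] [CompactSpace Y] [T2Space Y]
    (f : X → Y) (hf : Continuous f) (hsurj : Function.Surjective f) :
    FullyClosed f ↔
      ∀ (K : Type u) [MetricSpace K] [CompactSpace K] (g : X → K), Continuous g →
        ∀ ε : ℝ, 0 < ε → {y : Y | ε ≤ Metric.diam (g '' (f ⁻¹' {y}))}.Finite := by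
  constructor
  · intro h K _ _ g hg ε hε
    obtain ⟨t, -, htf, ht⟩ := Metric.totallyBounded_iff.1
      (isCompact_univ (X := K)).totallyBounded (ε / 8) (by positivity) |>.imp
        fun t ht => (⟨trivial, ht.1, ht.2⟩ : True ∧ _ ∧ _)
    have hfin : (⋃ p ∈ {p ∈ t ×ˢ t | ε / 4 < dist p.1 p.2},
        (f '' (g ⁻¹' closedBall p.1 (ε / 8)) ∩ f '' (g ⁻¹' closedBall p.2 (ε / 8)))).Finite := by
      refine Set.Finite.biUnion ((htf.prod htf).subset (sep_subset _ _)) ?_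
      rintro ⟨c, d⟩ ⟨-, hcd⟩
      refine h _ _ (isClosed_closedBall.preimage hg) (isClosed_closedBall.preimage hg) ?_
      refine Disjoint.preimage g (closedBall_disjoint_closedBall ?_)
      simp only at hcd
      linarith
    refine hfin.subset ?_
    intro y hy
    have hex : ∃ a, f a = y ∧ ∃ b, f b = y ∧ ε / 2 < dist (g a) (g b) := by
      by_contra hcon
      push Not at hcon
      have : Metric.diam (g '' (f ⁻¹' {y})) ≤ ε / 2 := by
        refine Metric.diam_le_of_forall_dist_le (by positivity) ?_
        rintro _ ⟨a, ha, rfl⟩ _ ⟨b, hb, rfl⟩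
        exact hcon a ha b hb
      have hy' : ε ≤ Metric.diam (g '' (f ⁻¹' {y})) := hy
      linarith
    obtain ⟨a, ha, b, hb, hab⟩ := hex
    obtain ⟨c, hc, hac⟩ := mem_iUnion₂.1 (ht (mem_univ (g a)))
    obtain ⟨d, hd, hbd⟩ := mem_iUnion₂.1 (ht (mem_univ (g b)))
    refine mem_iUnion₂.2 ⟨(c, d), ⟨⟨hc, hd⟩, ?_⟩, ⟨a, ball_subset_closedBall hac, ha⟩,
      ⟨b, ball_subset_closedBall hbd, hb⟩⟩
    have h1 : dist (g a) c < ε / 8 := hac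
    have h2 : dist (g b) d < ε / 8 := hbd
    have h3 := dist_triangle4 (g a) c d (g b)
    rw [dist_comm d] at h3
    show ε / 4 < dist c d
    linarith
  · intro h A B hA hB hAB
    obtain ⟨u, hu0, hu1, hu⟩ := exists_continuous_zero_one_of_isClosed hA hB hAB
    let g : X → ULift.{u} (Icc (0 : ℝ) 1) := fun x => ⟨⟨u x, hu x⟩⟩
    have hg : Continuous g := continuous_uliftUp.comp (u.continuous.subtype_mk _)
    refine (h _ g hg 1 one_pos).subset ?_
    rintro y ⟨⟨a, ha, hay⟩, ⟨b, hb, hby⟩⟩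
    have hd : dist (g a) (g b) = 1 := by
      show dist (u a) (u b) = 1
      rw [hu0 ha, hu1 hb]
      simp
    show (1 : ℝ) ≤ _
    refine hd.ge.trans <| Metric.dist_le_diam_of_mem (isCompact_univ.isBounded.subset (subset_univ _))
      ⟨a, hay, rfl⟩ ⟨b, hby, rfl⟩
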